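/- Let <_σ be a graded monomial order on S = K[x_1,…,x_n], let u ∈ M_d, and let L^i_{<_σ}(u) = {w ∈ M_d : w ≥_σ u} be the initial segment of M_d determined by u with respect to <_σ. Then L^i_{<_σ}(u) satisfies the σ-exchange property with respect to every monomial order < on R = K[{T_w}_{w ∈ L^i_{<_σ}(u)}]; consequently the ideal I = (L^i_{<_σ}(u)) is of fiber type. -/

import Mathlib

/-!
Let `B` be the initial segment `{w ∈ M_d : w ≥_σ u}`.

*Exchange.* If `U <_σ V` are monomials of the same degree, then there are variables
`x_q`, `x_j` with `U_q < V_q`, `V_j < U_j` and `x_j <_σ x_q` (`MonOrd.exists_exchange`):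
otherwise every variable of `U / gcd(U,V)` would be at least as large as every variable of
`V / gcd(U,V)`, and `U` would be at least as large as `V`. Applied to `U = u_1 ⋯ u_N` and
`V = v_1 ⋯ v_N`, the variable `x_j` divides some factor `u_δ`, and `x_q u_δ / x_j >_σ u_δ` lies
in the initial segment. Standardness of the monomials plays no role, so the exchange holds for
arbitrary monomials of `R` (`StrongExchange`, `strongExchange_initial`).

*Fiber type.* The map `φ` sends monomials to monomials, so `P = ker φ` is contained in any ideal
`Q` modulo which two monomials with the same image are congruent (`reesP_le`). Let `Q` be the
ideal in the definition of fiber type and let `x^a T^e`, `x^b T^{e'}` have the same image. If the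
`T`-parts have the same image in `S`, then `a = b` and `T^e - T^{e'} ∈ Q`. Otherwise, say,
`π(T^e) <_σ π(T^{e'})`; the exchange yields `q` with `π(T^e)_q < π(T^{e'})_q`, hence `a_q > b_q`,
so `x_q` divides `x^a` and the relation `x_q T_{u_δ} - x_j T_{x_q u_δ / x_j} ∈ Q`, linear in the
`T`'s, replaces `x^a` by the `σ`-smaller monomial `x^a x_j / x_q`. As `x^a` and `x^b` range over
the finitely many divisors of the fixed `S`-part of the common image, this process terminates
(`monT_sub_mem`).
-/


/-- Monomials of `K[x_1,…,x_n]`, encoded by their exponent vectors (`x_1` ↔ index `0`). -/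
abbrev Mon (n : ℕ) := Fin n →₀ ℕ

/-- Total degree of a monomial. -/
def mdeg {n : ℕ} (m : Mon n) : ℕ := ∑ i, m i

/-- `m <_lex m'` (so `m' >_lex m`) with `x_1 > x_2 > ⋯ > x_n`: at the first index where the
exponent vectors differ, `m'` has the larger exponent. -/
def LexLT {n : ℕ} (m m' : Mon n) : Prop :=
  ∃ i : Fin n, (∀ j, j < i → m j = m' j) ∧ m i < m' i

/-- `m ≤_lex m'`. -/
def LexLE {n : ℕ} (m m' : Mon n) : Prop := m = m' ∨ LexLT m m'

/-- `m >_revlex m'` for monomials of equal degree: at the last index where the exponent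
vectors differ, `m` has the smaller exponent. -/
def RevLexGT {n : ℕ} (m m' : Mon n) : Prop :=
  ∃ s : Fin n, (∀ t, s < t → m t = m' t) ∧ m s < m' s

/-- The decreasing revlexicographic order on monomials: `m <_σ m'` iff `deg m < deg m'`, or
the degrees agree and `m >_revlex m'`. -/
def DecRevLexLT {n : ℕ} (m m' : Mon n) : Prop :=
  mdeg m < mdeg m' ∨ (mdeg m = mdeg m' ∧ RevLexGT m m')

/-- The lexsegment set `L(u,v) = {w ∈ M_d : u ≥_lex w ≥_lex v}`. -/
def LSeg {n : ℕ} (u v : Mon n) (d : ℕ) : Set (Mon n) :=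
  {w | mdeg w = d ∧ LexLE w u ∧ LexLE v w}

/-- `A` is a lexsegment set inside `M_e`. -/
def IsLexSegmentSet {n : ℕ} (A : Set (Mon n)) (e : ℕ) : Prop :=
  ∃ u v : Mon n, mdeg u = e ∧ mdeg v = e ∧ LexLE v u ∧ A = LSeg u v e

/-- `(L(u,v))` is a completely lexsegment ideal: for every `k ≥ 0` the `k`-th shadow
`{m·w : m ∈ M_k, w ∈ L(u,v)}` is a lexsegment set in `M_{d+k}`. -/
def IsCompletelyLex {n : ℕ} (u v : Mon n) (d : ℕ) : Prop :=
  ∀ k : ℕ,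
    IsLexSegmentSet {w | ∃ m w₀, mdeg m = k ∧ w₀ ∈ LSeg u v d ∧ w = m + w₀} (d + k)

/-- The set of products of `N` monomials from `B`; for `B` a set of monomials of a fixed
degree `d` this is the minimal monomial generating set of `I^N`, `I = (B)`. -/
def prodSet {n : ℕ} (B : Set (Mon n)) (N : ℕ) : Set (Mon n) :=
  {m | ∃ f : Fin N → Mon n, (∀ i, f i ∈ B) ∧ m = ∑ i, f i}

/-- The equigenerated monomial ideal with (minimal) monomial generating set `G` has linear
quotients with respect to the order given by `prec` (`prec a b` = "`a` is listed before
`b`"): for generators `u_j` before `u_i` there are a generator `u_k` before `u_i` and a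
variable `x_q` with `u_k / gcd(u_k,u_i) = x_q` and `x_q ∣ u_j / gcd(u_j,u_i)`. -/
def LinQuotOrder {n : ℕ} (G : Set (Mon n)) (prec : Mon n → Mon n → Prop) : Prop :=
  ∀ uj ∈ G, ∀ ui ∈ G, prec uj ui →
    ∃ uk ∈ G, prec uk ui ∧ ∃ q : Fin n,
      (∀ p : Fin n, p ≠ q → uk p ≤ ui p) ∧ uk q = ui q + 1 ∧ ui q < uj q

/-- The equigenerated monomial ideal with minimal monomial generating set `G` has linear
quotients (with respect to some linear order of the generators). -/
def HasLinQuot {n : ℕ} (G : Set (Mon n)) : Prop :=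
  ∃ prec : Mon n → Mon n → Prop,
    (∀ a ∈ G, ¬ prec a a) ∧
    (∀ a ∈ G, ∀ b ∈ G, ∀ c ∈ G, prec a b → prec b c → prec a c) ∧
    (∀ a ∈ G, ∀ b ∈ G, a ≠ b → prec a b ∨ prec b a) ∧
    LinQuotOrder G prec
/-- A monomial order on a polynomial ring with variables indexed by `α`, given as a strict
total order on exponent vectors which is compatible with multiplication of monomials and
for which `1` is the smallest monomial. -/
structure MonOrd (α : Type*) where
  lt : (α →₀ ℕ) → (α →₀ ℕ) → Prop
  irrefl : ∀ a, ¬ lt a a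
  trans : ∀ a b c, lt a b → lt b c → lt a c
  total : ∀ a b, a ≠ b → lt a b ∨ lt b a
  add_right : ∀ a b c, lt a b → lt (a + c) (b + c)
  zero_lt : ∀ a, a ≠ 0 → lt 0 a

/-- The map `π : R = K[{T_u}_{u ∈ B}] → S`, `T_u ↦ u`. -/
noncomputable def piB {n : ℕ} (K : Type*) [Field K] (B : Set (Mon n)) :
    MvPolynomial ↥B K →ₐ[K] MvPolynomial (Fin n) K :=
  MvPolynomial.aeval (fun u : ↥B => MvPolynomial.monomial (u : Mon n) (1 : K))

/-- The toric ideal `J = ker π` of `K[B]`. -/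
noncomputable def toricJ {n : ℕ} (K : Type*) [Field K] (B : Set (Mon n)) :
    Ideal (MvPolynomial ↥B K) :=
  RingHom.ker (piB K B).toRingHom

/-- `m` is the leading monomial of `f ≠ 0` with respect to the order `lt` on exponent
vectors. -/
def IsLeadMon {α K : Type*} [CommSemiring K] (lt : (α →₀ ℕ) → (α →₀ ℕ) → Prop)
    (f : MvPolynomial α K) (m : α →₀ ℕ) : Prop :=
  m ∈ f.support ∧ ∀ m' ∈ f.support, m' ≠ m → lt m' m

/-- `m` is a standard monomial of the ideal `J` with respect to the order `lt`: it is not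
the leading monomial of any nonzero element of `J`. -/
def IsStdMon {α K : Type*} [CommSemiring K] (lt : (α →₀ ℕ) → (α →₀ ℕ) → Prop)
    (J : Ideal (MvPolynomial α K)) (m : α →₀ ℕ) : Prop :=
  ∀ f ∈ J, f ≠ 0 → ¬ IsLeadMon lt f m

/-- The image in `S` of a monomial `T_{u_1} ⋯ T_{u_N}` of `R`, i.e. the product
`u_1 ⋯ u_N`. -/
noncomputable def expandB {n : ℕ} {B : Set (Mon n)} (e : ↥B →₀ ℕ) : Mon n :=
  e.sum fun u k => k • (u : Mon n)

/-- The number `N` of factors of a monomial `T_{u_1} ⋯ T_{u_N}` of `R`. -/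
def edeg {n : ℕ} {B : Set (Mon n)} (e : ↥B →₀ ℕ) : ℕ := e.sum fun _ k => k

/-- `B` satisfies the σ-exchange property (with respect to the order `ltσ` on the monomials
of `S` and the order `ltR` on the monomials of `R = K[{T_u}_{u∈B}]`): whenever
`T_{u_1}⋯T_{u_N}` and `T_{v_1}⋯T_{v_N}` are standard monomials of `J` with
`u_1⋯u_N <_σ v_1⋯v_N`, there are a factor `u_δ`, a `q ∈ supp(v_1⋯v_N)` and a
`j ∈ supp(u_δ)` with `ν_q(u_1⋯u_N) < ν_q(v_1⋯v_N)`, `x_j <_σ x_q` and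
`x_q u_δ / x_j ∈ B`. -/
def SigmaExchange {n : ℕ} (K : Type*) [Field K] (B : Set (Mon n))
    (ltσ : Mon n → Mon n → Prop)
    (ltR : (↥B →₀ ℕ) → (↥B →₀ ℕ) → Prop) : Prop :=
  ∀ e e' : ↥B →₀ ℕ, edeg e = edeg e' →
    IsStdMon ltR (toricJ K B) e → IsStdMon ltR (toricJ K B) e' →
    ltσ (expandB e) (expandB e') →
    ∃ uδ : ↥B, 0 < e uδ ∧ ∃ q j : Fin n,
      expandB e q < expandB e' q ∧
      0 < (uδ : Mon n) j ∧
      ltσ (Finsupp.single j 1) (Finsupp.single q 1) ∧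
      ((uδ : Mon n) + Finsupp.single q 1 - Finsupp.single j 1) ∈ B

/-- The map `φ : 𝒯 = K[x_1,…,x_n,{T_u}_{u∈B}] → S[t]`, `x_i ↦ x_i`, `T_u ↦ u·t`; its image
is the Rees algebra of `I = (B)`. -/
noncomputable def reesPhi {n : ℕ} (K : Type*) [Field K] (B : Set (Mon n)) :
    MvPolynomial (Fin n ⊕ ↥B) K →ₐ[K] Polynomial (MvPolynomial (Fin n) K) :=
  MvPolynomial.aeval (Sum.elim
    (fun i : Fin n => Polynomial.C (MvPolynomial.X i))
    (fun u : ↥B => Polynomial.C (MvPolynomial.monomial (u : Mon n) (1 : K)) * Polynomial.X))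

/-- The toric ideal `P = ker φ` of the Rees algebra of `I = (B)`. -/
noncomputable def reesP {n : ℕ} (K : Type*) [Field K] (B : Set (Mon n)) :
    Ideal (MvPolynomial (Fin n ⊕ ↥B) K) :=
  RingHom.ker (reesPhi K B).toRingHom

/-- `f ∈ 𝒯` only involves the variables `T_u`, i.e. `f ∈ K[{T_u}_{u∈B}]`. -/
def OnlyT {n : ℕ} {K : Type*} [Field K] {B : Set (Mon n)}
    (f : MvPolynomial (Fin n ⊕ ↥B) K) : Prop :=
  ∀ m ∈ f.support, ∀ i : Fin n, m (Sum.inl i) = 0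

/-- `f ∈ 𝒯` is homogeneous of degree `1` in the variables `T_u`. -/
def TDegOne {n : ℕ} {K : Type*} [Field K] {B : Set (Mon n)}
    (f : MvPolynomial (Fin n ⊕ ↥B) K) : Prop :=
  ∀ m ∈ f.support, (∑ s ∈ m.support, if s.isRight then m s else 0) = 1

/-- The monomial ideal `I = (B)` is of fiber type: the toric ideal `P` of its Rees algebra
is generated by `P ∩ K[{T_u}_{u∈B}]` together with the elements of `P` homogeneous of
degree `1` in the variables `T_u`. -/
def IsFiberType {n : ℕ} (K : Type*) [Field K] (B : Set (Mon n)) : Prop :=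
  reesP K B =
    Ideal.span ({f | f ∈ reesP K B ∧ OnlyT f} ∪ {f | f ∈ reesP K B ∧ TDegOne f})

/-- The `S`-part of a monomial of `𝒯`. -/
noncomputable def sPart {n : ℕ} {B : Set (Mon n)} (m : (Fin n ⊕ ↥B) →₀ ℕ) : Mon n :=
  (Finsupp.sumFinsuppEquivProdFinsupp m).1

/-- The `T`-part of a monomial of `𝒯`. -/
noncomputable def tPart {n : ℕ} {B : Set (Mon n)} (m : (Fin n ⊕ ↥B) →₀ ℕ) : ↥B →₀ ℕ :=
  (Finsupp.sumFinsuppEquivProdFinsupp m).2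

/-- The product order `<_σ^#` on the monomials of `𝒯 = K[x_1,…,x_n,{T_u}_{u∈B}]`. -/
def ProdLT {n : ℕ} {B : Set (Mon n)} (ltσ : Mon n → Mon n → Prop)
    (ltR : (↥B →₀ ℕ) → (↥B →₀ ℕ) → Prop)
    (m m' : (Fin n ⊕ ↥B) →₀ ℕ) : Prop :=
  ltσ (sPart m) (sPart m') ∨ (sPart m = sPart m' ∧ ltR (tPart m) (tPart m'))

/-- `G` is a Gröbner basis of the ideal `P` with respect to the order `lt`: the leading
monomial of every nonzero `f ∈ P` is divisible by the leading monomial of some element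
of `G`. -/
def IsGB {α K : Type*} [CommSemiring K] (lt : (α →₀ ℕ) → (α →₀ ℕ) → Prop)
    (P : Ideal (MvPolynomial α K)) (G : Set (MvPolynomial α K)) : Prop :=
  ∀ f ∈ P, f ≠ 0 → ∃ g ∈ G, g ≠ 0 ∧
    ∃ mg mf, IsLeadMon lt g mg ∧ IsLeadMon lt f mf ∧ mg ≤ mf
/-! ### The exchange property -/

lemma mdeg_add {n : ℕ} (a b : Mon n) : mdeg (a + b) = mdeg a + mdeg b := by
  simp [mdeg, Finset.sum_add_distrib]

lemma mdeg_single {n : ℕ} (i : Fin n) (k : ℕ) : mdeg (Finsupp.single i k) = k := by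
  simp [mdeg, Finsupp.single_apply]

lemma expandB_apply {n : ℕ} {B : Set (Mon n)} (e : ↥B →₀ ℕ) (i : Fin n) :
    expandB e i = ∑ u ∈ e.support, e u * (u : Mon n) i := by
  simp [expandB, Finsupp.sum, Finsupp.finsetSum_apply]

lemma mdeg_expandB {n d : ℕ} {B : Set (Mon n)} (hB : ∀ w ∈ B, mdeg w = d) (e : ↥B →₀ ℕ) :
    mdeg (expandB e) = edeg e * d := by
  unfold mdeg
  simp_rw [expandB_apply]
  rw [Finset.sum_comm, edeg, Finsupp.sum, Finset.sum_mul]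
  refine Finset.sum_congr rfl fun w _ => ?_
  rw [← Finset.mul_sum, ← hB w w.2, mdeg]

/-- If `U <_σ V` have the same degree, some variable of `U / gcd(U,V)` is smaller than some
variable of `V / gcd(U,V)`. -/
lemma MonOrd.exists_exchange {n : ℕ} (σ : MonOrd (Fin n)) (V : Mon n) (k : ℕ) :
    ∀ U : Mon n, mdeg (V - U) = k → mdeg U = mdeg V → σ.lt U V →
      ∃ q j : Fin n, U q < V q ∧ V j < U j ∧
        σ.lt (Finsupp.single j 1) (Finsupp.single q 1) := by
  induction k using Nat.strong_induction_on with
  | _ k ih =>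
  intro U hk hdeg hlt
  have hne : U ≠ V := fun h => σ.irrefl V (h ▸ hlt)
  obtain ⟨q, hq⟩ : ∃ q, U q < V q := by
    by_contra! h
    exact hne (Finsupp.ext fun i => ((Finset.sum_eq_sum_iff_of_le fun i _ => h i).1
      hdeg.symm i (Finset.mem_univ i)).symm)
  obtain ⟨j, hj⟩ : ∃ j, V j < U j := by
    by_contra! h
    exact hne (Finsupp.ext fun i => (Finset.sum_eq_sum_iff_of_le fun i _ => h i).1
      hdeg i (Finset.mem_univ i))
  by_cases hjq : σ.lt (Finsupp.single j 1) (Finsupp.single q 1)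
  · exact ⟨q, j, hq, hj, hjq⟩
  have hjne : j ≠ q := by rintro rfl; omega
  have hqj : σ.lt (Finsupp.single q 1) (Finsupp.single j 1) :=
    (σ.total _ _ fun h => hjne (Finsupp.single_left_injective one_ne_zero h)).resolve_left hjq
  -- Trading `x_j` for the smaller `x_q` in `U` keeps `U <_σ V` and brings `U` closer to `V`.
  obtain ⟨W, rfl⟩ : ∃ W, U = Finsupp.single j 1 + W :=
    exists_add_of_le (Finsupp.single_le_iff.2 (by omega))
  have hval : ∀ i, (Finsupp.single q 1 + W : Mon n) i = (if q = i then 1 else 0) + W i ∧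
      (Finsupp.single j 1 + W : Mon n) i = (if j = i then 1 else 0) + W i := fun i => by
    simp [Finsupp.single_apply]
  have hlt' := σ.trans _ _ _ (σ.add_right _ _ W hqj) hlt
  obtain ⟨q', j', h1, h2, h3⟩ := ih (mdeg (V - (Finsupp.single q 1 + W))) (by
      rw [← hk]
      refine Finset.sum_lt_sum (fun i _ => ?_) ⟨q, Finset.mem_univ q, ?_⟩
      · rw [Finsupp.tsub_apply, Finsupp.tsub_apply, (hval i).1, (hval i).2]
        have := (hval j).2
        by_cases h : j = i
        · subst h; simp only [if_true] at *; split_ifs <;> omega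
        · simp only [h, if_false]; omega
      · have := (hval q).2
        rw [Finsupp.tsub_apply, Finsupp.tsub_apply, (hval q).1, (hval q).2]
        simp only [hjne, if_true, if_false] at *; omega)
    (Finsupp.single q 1 + W) rfl
    (by rw [← hdeg, mdeg_add, mdeg_add, mdeg_single, mdeg_single]) hlt'
  refine ⟨q', j', ?_, ?_, h3⟩
  · rw [(hval q').1] at h1
    rw [(hval q').2]
    have := (hval j).2
    by_cases h : j = q'
    · subst h; simp only [if_true] at *; split_ifs at h1 <;> omega
    · simp only [h, if_false]; omega
  · rw [(hval j').1] at h2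
    rw [(hval j').2]
    have := (hval q).2
    by_cases h : q = j'
    · subst h; simp only [hjne, if_true, if_false] at *; omega
    · simp only [h, if_false] at h2; omega

/-- The exchange property for all pairs of monomials of `R` of the same degree, standard or not.
The factor is written as `u_δ = x_j w`, so that the exchanged monomial is `x_q w`. -/
def StrongExchange {n : ℕ} (B : Set (Mon n)) (σ : MonOrd (Fin n)) : Prop :=
  ∀ e e' : ↥B →₀ ℕ, edeg e = edeg e' → σ.lt (expandB e) (expandB e') →
    ∃ uδ : ↥B, 0 < e uδ ∧ ∃ (q j : Fin n) (w : Mon n),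
      expandB e q < expandB e' q ∧ (uδ : Mon n) = Finsupp.single j 1 + w ∧
      σ.lt (Finsupp.single j 1) (Finsupp.single q 1) ∧ Finsupp.single q 1 + w ∈ B

lemma strongExchange_initial {n : ℕ} (σ : MonOrd (Fin n)) (d : ℕ) (u : Mon n) :
    StrongExchange {w : Mon n | mdeg w = d ∧ (w = u ∨ σ.lt u w)} σ := by
  intro e e' hN hlt
  obtain ⟨q, j, hq, hj, hjq⟩ := σ.exists_exchange (expandB e') _ (expandB e) rfl
    (by rw [mdeg_expandB (d := d) (fun w hw => hw.1), mdeg_expandB (d := d) (fun w hw => hw.1),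
      hN]) hlt
  have hpos : expandB e j ≠ 0 := by omega
  rw [expandB_apply] at hpos
  obtain ⟨uδ, -, hδ⟩ := Finset.exists_ne_zero_of_sum_ne_zero hpos
  obtain ⟨w, hw⟩ : ∃ w, (uδ : Mon n) = Finsupp.single j 1 + w :=
    exists_add_of_le (Finsupp.single_le_iff.2 (Nat.pos_of_ne_zero (right_ne_zero_of_mul hδ)))
  refine ⟨uδ, Nat.pos_of_ne_zero (left_ne_zero_of_mul hδ), q, j, w, hq, hw, hjq, ?_, Or.inr ?_⟩
  · rw [← uδ.2.1, hw, mdeg_add, mdeg_add, mdeg_single, mdeg_single]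
  · have h := σ.add_right _ _ w hjq
    rw [← hw] at h
    rcases uδ.2.2 with h0 | h0
    · rwa [← h0]
    · exact σ.trans _ _ _ h0 h

lemma StrongExchange.sigmaExchange {n : ℕ} (K : Type*) [Field K] {B : Set (Mon n)}
    {σ : MonOrd (Fin n)} (h : StrongExchange B σ) (ltR : (↥B →₀ ℕ) → (↥B →₀ ℕ) → Prop) :
    SigmaExchange K B σ.lt ltR := by
  intro e e' hN _ _ hlt
  obtain ⟨uδ, hpos, q, j, w, hq, hw, hjq, hB⟩ := h e e' hN hlt
  refine ⟨uδ, hpos, q, j, hq, by simp [hw], hjq, ?_⟩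
  have : (uδ : Mon n) + Finsupp.single q 1 - Finsupp.single j 1 = Finsupp.single q 1 + w := by
    rw [hw, add_assoc, add_tsub_cancel_left, add_comm]
  rwa [this]

/-! ### The toric ideal of the Rees algebra -/

/-- The multidegree `(c, N)` of a monomial of `K[x, T]`: its image under `φ` is `x^c t^N`. -/
noncomputable def reesDeg {n : ℕ} (B : Set (Mon n)) :
    ((Fin n ⊕ ↥B) →₀ ℕ) →ₗ[ℕ] Mon n × ℕ :=
  Finsupp.linearCombination ℕ
    (Sum.elim (fun i => (Finsupp.single i 1, 0)) (fun u : ↥B => ((u : Mon n), 1)))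

lemma reesPhi_monomial {n : ℕ} {K : Type*} [Field K] {B : Set (Mon n)}
    (m : (Fin n ⊕ ↥B) →₀ ℕ) :
    reesPhi K B (MvPolynomial.monomial m 1) =
      Polynomial.monomial (reesDeg B m).2 (MvPolynomial.monomial (reesDeg B m).1 1) := by
  induction m using Finsupp.induction_linear with
  | zero => simp [MvPolynomial.monomial_zero']
  | add f g hf hg =>
    rw [← one_mul (1 : K), ← MvPolynomial.monomial_mul, map_mul, hf, hg,
      Polynomial.monomial_mul_monomial, MvPolynomial.monomial_mul, map_add, one_mul]
    rfl
  | single s k =>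
    rw [← MvPolynomial.X_pow_eq_monomial, map_pow]
    rcases s with i | u
    · simp [reesPhi, reesDeg, Polynomial.monomial_zero_left, MvPolynomial.X_pow_eq_monomial,
        ← map_pow]
    · simp [reesPhi, reesDeg, mul_pow, ← map_pow, MvPolynomial.monomial_pow,
        Polynomial.C_mul_X_pow_eq_monomial]

lemma sub_mem_reesP {n : ℕ} {K : Type*} [Field K] {B : Set (Mon n)}
    {m m' : (Fin n ⊕ ↥B) →₀ ℕ} (h : reesDeg B m = reesDeg B m') :
    (MvPolynomial.monomial m 1 - MvPolynomial.monomial m' 1 : MvPolynomial _ K) ∈ reesP K B := by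
  change reesPhi K B _ = 0
  rw [map_sub, reesPhi_monomial, reesPhi_monomial, h, sub_self]

/-- An ideal containing all the binomials of `P` contains `P`. Reason: the quotient map factors
through `φ`, by the linear map sending `x^c t^N` to the class of any monomial of multidegree
`(c, N)`. -/
lemma reesP_le {n : ℕ} {K : Type*} [Field K] {B : Set (Mon n)}
    (Q : Ideal (MvPolynomial (Fin n ⊕ ↥B) K))
    (hQ : ∀ m m' : (Fin n ⊕ ↥B) →₀ ℕ, reesDeg B m = reesDeg B m' →
      (MvPolynomial.monomial m 1 - MvPolynomial.monomial m' 1 : MvPolynomial _ K) ∈ Q) :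
    reesP K B ≤ Q := by
  let ψ : Polynomial (MvPolynomial (Fin n) K) →ₗ[K] (MvPolynomial (Fin n ⊕ ↥B) K ⧸ Q) :=
    Polynomial.lsum fun N => (MvPolynomial.basisMonomials (Fin n) K).constr K fun c =>
      Ideal.Quotient.mk Q (MvPolynomial.monomial (Function.invFun (reesDeg B) (c, N)) 1)
  have hψ : ψ ∘ₗ (reesPhi K B).toLinearMap = (Ideal.Quotient.mkₐ K Q).toLinearMap := by
    refine (MvPolynomial.basisMonomials (Fin n ⊕ ↥B) K).ext fun m => ?_
    have h1 : ∀ c, (MvPolynomial.monomial c 1 : MvPolynomial (Fin n) K) =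
      MvPolynomial.basisMonomials (Fin n) K c := fun c => by simp
    simp only [MvPolynomial.coe_basisMonomials, LinearMap.comp_apply, AlgHom.toLinearMap_apply,
      reesPhi_monomial, ψ, Polynomial.lsum_apply]
    rw [Polynomial.sum_monomial_index _ _ (by simp), h1, Module.Basis.constr_basis]
    exact Ideal.Quotient.eq.2 (hQ _ _ (Function.invFun_eq ⟨m, rfl⟩))
  intro f hf
  have hf' : reesPhi K B f = 0 := hf
  have h2 := LinearMap.congr_fun hψ f
  simp only [LinearMap.comp_apply, AlgHom.toLinearMap_apply, hf', map_zero] at h2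
  exact Ideal.Quotient.eq_zero_iff_mem.1 h2.symm

/-! ### Fiber type from the exchange property -/

/-- The exponent vector of `x^a T^e`. -/
noncomputable def expT {n : ℕ} {B : Set (Mon n)} (a : Mon n) (e : ↥B →₀ ℕ) :
    (Fin n ⊕ ↥B) →₀ ℕ :=
  a.mapDomain Sum.inl + e.mapDomain Sum.inr

lemma expT_add {n : ℕ} {B : Set (Mon n)} (a a' : Mon n) (e e' : ↥B →₀ ℕ) :
    expT (a + a') (e + e') = expT a e + expT a' e' := by
  simp only [expT, Finsupp.mapDomain_add]; abel

lemma exists_expT {n : ℕ} {B : Set (Mon n)} (m : (Fin n ⊕ ↥B) →₀ ℕ) : ∃ a e, m = expT a e := by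
  induction m using Finsupp.induction_linear with
  | zero => exact ⟨0, 0, by simp [expT]⟩
  | add f g hf hg =>
    obtain ⟨a, e, rfl⟩ := hf
    obtain ⟨b, e', rfl⟩ := hg
    exact ⟨_, _, (expT_add _ _ _ _).symm⟩
  | single s k =>
    rcases s with i | u
    · exact ⟨Finsupp.single i k, 0, by simp [expT, Finsupp.mapDomain_single]⟩
    · exact ⟨0, Finsupp.single u k, by simp [expT, Finsupp.mapDomain_single]⟩

lemma reesDeg_expT {n : ℕ} {B : Set (Mon n)} (a : Mon n) (e : ↥B →₀ ℕ) :
    reesDeg B (expT a e) = (a + expandB e, edeg e) := by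
  rw [reesDeg, expT, map_add, Finsupp.linearCombination_mapDomain,
    Finsupp.linearCombination_mapDomain]
  have h1 : Finsupp.linearCombination ℕ
      ((Sum.elim (fun i => (Finsupp.single i 1, 0)) (fun u : ↥B => ((u : Mon n), 1)) :
        Fin n ⊕ ↥B → Mon n × ℕ) ∘ Sum.inl) a = (a, 0) := by
    induction a using Finsupp.induction_linear with
    | zero => rw [map_zero, Prod.mk_zero_zero]
    | add f g hf hg => rw [map_add, hf, hg]; simp
    | single i k => simp
  rw [h1, Finsupp.linearCombination_apply]
  ext1
  · simp [Finsupp.sum, expandB, Prod.fst_sum]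
  · simp [Finsupp.sum, edeg, Prod.snd_sum]

/-- The ideal generated by the `T`-only elements and the `T`-linear elements of `P`. -/
noncomputable def fiberIdeal {n : ℕ} (K : Type*) [Field K] (B : Set (Mon n)) :
    Ideal (MvPolynomial (Fin n ⊕ ↥B) K) :=
  Ideal.span ({f | f ∈ reesP K B ∧ OnlyT f} ∪ {f | f ∈ reesP K B ∧ TDegOne f})

lemma mem_support_binomial {α K : Type*} [Field K] {m m' p : α →₀ ℕ}
    (h : p ∈ (MvPolynomial.monomial m 1 - MvPolynomial.monomial m' 1 :
      MvPolynomial α K).support) : p = m ∨ p = m' := by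
  classical
  rcases Finset.mem_union.1 (MvPolynomial.support_sub _ _ _ h) with h | h
  · exact Or.inl (Finset.mem_singleton.1 (MvPolynomial.support_monomial_subset h))
  · exact Or.inr (Finset.mem_singleton.1 (MvPolynomial.support_monomial_subset h))

lemma onlyT_mem {n : ℕ} {K : Type*} [Field K] {B : Set (Mon n)} {e e' : ↥B →₀ ℕ}
    (h : expandB e = expandB e') (hN : edeg e = edeg e') :
    (MvPolynomial.monomial (expT 0 e) 1 - MvPolynomial.monomial (expT 0 e') 1 :
      MvPolynomial _ K) ∈ fiberIdeal K B := by
  refine Ideal.subset_span (Or.inl ⟨sub_mem_reesP ?_, ?_⟩)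
  · rw [reesDeg_expT, reesDeg_expT, h, hN]
  · intro p hp i
    have key : ∀ e : ↥B →₀ ℕ, expT (0 : Mon n) e (Sum.inl i) = 0 := fun e => by
      rw [expT, Finsupp.mapDomain_zero, zero_add]
      exact Finsupp.mapDomain_of_notMem_range _ _ (by simp)
    rcases mem_support_binomial hp with rfl | rfl <;> exact key _

lemma tDegOne_mem {n : ℕ} {K : Type*} [Field K] {B : Set (Mon n)} {q j : Fin n} {v w : ↥B}
    (h : Finsupp.single q 1 + (v : Mon n) = Finsupp.single j 1 + (w : Mon n)) :
    (MvPolynomial.monomial (expT (Finsupp.single q 1) (Finsupp.single v 1)) 1 -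
      MvPolynomial.monomial (expT (Finsupp.single j 1) (Finsupp.single w 1)) 1 :
      MvPolynomial _ K) ∈ fiberIdeal K B := by
  refine Ideal.subset_span (Or.inr ⟨sub_mem_reesP ?_, ?_⟩)
  · rw [reesDeg_expT, reesDeg_expT]
    simp [expandB, edeg, h]
  · intro p hp
    have key : ∀ (i : Fin n) (x : ↥B),
        (∑ s ∈ (expT (Finsupp.single i 1) (Finsupp.single x 1)).support, if s.isRight then
          expT (Finsupp.single i 1) (Finsupp.single x 1) s else 0) = 1 := fun i x => by
      change (expT (Finsupp.single i 1) (Finsupp.single x 1)).sum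
        (fun s k => if s.isRight then k else 0) = 1
      rw [expT, Finsupp.sum_add_index' (by simp) (fun s _ _ => by split_ifs <;> rfl)]
      simp [Finsupp.mapDomain_single]
    rcases mem_support_binomial hp with rfl | rfl <;> exact key _ _

/-- The number of divisors of `x^c` that are `σ`-smaller than `x^a`; it measures the progress of
the rewriting of `x^a` inside the divisors of `x^c`. -/
noncomputable def rankBelow {n : ℕ} (σ : MonOrd (Fin n)) (c a : Mon n) : ℕ :=
  Set.ncard {m : Mon n | m ≤ c ∧ σ.lt m a}

lemma rankBelow_lt {n : ℕ} (σ : MonOrd (Fin n)) {c a a' : Mon n} (ha' : a' ≤ c)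
    (h : σ.lt a' a) : rankBelow σ c a' < rankBelow σ c a := by
  refine Set.ncard_lt_ncard ⟨fun m hm => ⟨hm.1, σ.trans _ _ _ hm.2 h⟩, fun hs => ?_⟩
    ((Set.finite_Iic c).subset fun m hm => hm.1)
  exact σ.irrefl a' (hs ⟨ha', h⟩).2

/-- One rewriting step: if `π(T^e) <_σ π(T^{e'})` and `x^a T^e`, `x^b T^{e'}` have the same image
under `φ`, then `x^a T^e` is congruent to some `x^{a'} T^{e''}` with `a' <_σ a`. -/
lemma exists_step {n : ℕ} {K : Type*} [Field K] {B : Set (Mon n)} {σ : MonOrd (Fin n)}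
    (hex : StrongExchange B σ) {a b : Mon n} {e e' : ↥B →₀ ℕ}
    (h : a + expandB e = b + expandB e') (hN : edeg e = edeg e')
    (hlt : σ.lt (expandB e) (expandB e')) :
    ∃ a' e'', σ.lt a' a ∧ reesDeg B (expT a' e'') = reesDeg B (expT a e) ∧
      (MvPolynomial.monomial (expT a e) 1 - MvPolynomial.monomial (expT a' e'') 1 :
        MvPolynomial _ K) ∈ fiberIdeal K B := by
  obtain ⟨v, hv, q, j, w, hq, hvw, hjq, hB⟩ := hex e e' hN hlt
  have hqa : 1 ≤ a q := by
    have := DFunLike.congr_fun h q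
    simp only [Finsupp.add_apply] at this
    omega
  obtain ⟨a₀, rfl⟩ := exists_add_of_le (Finsupp.single_le_iff.2 hqa)
  obtain ⟨e₀, rfl⟩ := exists_add_of_le (Finsupp.single_le_iff.2 (show 1 ≤ e v from hv))
  have hrel : Finsupp.single q 1 + (v : Mon n) =
      Finsupp.single j 1 + ((⟨_, hB⟩ : ↥B) : Mon n) := by
    rw [hvw]; exact add_left_comm _ _ _
  refine ⟨Finsupp.single j 1 + a₀, Finsupp.single ⟨_, hB⟩ 1 + e₀, σ.add_right _ _ _ hjq, ?_, ?_⟩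
  · rw [expT_add, expT_add, map_add, map_add, reesDeg_expT, reesDeg_expT (Finsupp.single q 1)]
    simp only [expandB, edeg, Finsupp.sum_single_index, zero_smul, one_smul, hrel]
  · have := (fiberIdeal K B).mul_mem_right (MvPolynomial.monomial (expT a₀ e₀) 1)
      (tDegOne_mem (K := K) hrel)
    rwa [sub_mul, MvPolynomial.monomial_mul, MvPolynomial.monomial_mul, ← expT_add, ← expT_add,
      one_mul] at this

/-- Monomials with the same image under `φ` are congruent modulo the fiber-type ideal. -/
lemma monT_sub_mem {n : ℕ} {K : Type*} [Field K] {B : Set (Mon n)} {σ : MonOrd (Fin n)}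
    (hex : StrongExchange B σ) (c : Mon n) (N k : ℕ) :
    ∀ (a b : Mon n) (e e' : ↥B →₀ ℕ), rankBelow σ c a + rankBelow σ c b = k →
      reesDeg B (expT a e) = (c, N) → reesDeg B (expT b e') = (c, N) →
      (MvPolynomial.monomial (expT a e) 1 - MvPolynomial.monomial (expT b e') 1 :
        MvPolynomial _ K) ∈ fiberIdeal K B := by
  induction k using Nat.strong_induction_on with
  | _ k ih =>
  intro a b e e' hk ha hb
  have hle : ∀ {a' e''}, reesDeg B (expT a' e'') = (c, N) → a' ≤ c := fun {a' e''} h => by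
    rw [reesDeg_expT, Prod.mk.injEq] at h
    exact h.1 ▸ le_self_add
  have ha' := ha
  have hb' := hb
  rw [reesDeg_expT, Prod.mk.injEq] at ha' hb'
  have h := ha'.1.trans hb'.1.symm
  have hN := ha'.2.trans hb'.2.symm
  by_cases heq : expandB e = expandB e'
  · have hab : a = b := by rw [heq] at h; exact add_right_cancel h
    subst hab
    have := (fiberIdeal K B).mul_mem_left (MvPolynomial.monomial (expT a 0) 1)
      (onlyT_mem (K := K) heq hN)
    rwa [mul_sub, MvPolynomial.monomial_mul, MvPolynomial.monomial_mul, ← expT_add, ← expT_add,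
      one_mul, add_zero, zero_add, zero_add] at this
  rcases σ.total _ _ heq with hlt | hlt
  · obtain ⟨a', e'', hlt', hdeg, hmem⟩ := exists_step (K := K) hex h hN hlt
    have hr := rankBelow_lt σ (hle (hdeg.trans ha)) hlt'
    have := ih _ (by omega) a' b e'' e' rfl (hdeg.trans ha) hb
    simpa using add_mem hmem this
  · obtain ⟨b', e'', hlt', hdeg, hmem⟩ := exists_step (K := K) hex h.symm hN.symm hlt
    have hr := rankBelow_lt σ (hle (hdeg.trans hb)) hlt'
    have := ih _ (by omega) a b' e e'' rfl ha (hdeg.trans hb)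
    simpa using sub_mem this hmem

lemma StrongExchange.isFiberType {n : ℕ} (K : Type*) [Field K] {B : Set (Mon n)}
    {σ : MonOrd (Fin n)} (hex : StrongExchange B σ) : IsFiberType K B := by
  refine le_antisymm (reesP_le (fiberIdeal K B) fun m m' h => ?_) (Ideal.span_le.2 ?_)
  · obtain ⟨a, e, rfl⟩ := exists_expT m
    obtain ⟨b, e', rfl⟩ := exists_expT m'
    exact monT_sub_mem hex _ _ _ a b e e' rfl h rfl
  · rintro f (hf | hf) <;> exact hf.1

/-- for a graded monomial order `<_σ` on `S` and `u ∈ M_d`, the initial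
segment `L^i_{<_σ}(u) = {w ∈ M_d : w ≥_σ u}` satisfies the σ-exchange property with
respect to every monomial order on `R = K[{T_w}_{w ∈ L^i_{<_σ}(u)}]`; consequently the
ideal `I = (L^i_{<_σ}(u))` is of fiber type. -/
theorem stmt16 {n : ℕ} (hn : 0 < n) (K : Type*) [Field K]
    (σ : MonOrd (Fin n))
    (hgraded : ∀ m m' : Mon n, mdeg m < mdeg m' → σ.lt m m')
    (d : ℕ) (u : Mon n) (hud : mdeg u = d) :
    (∀ o : MonOrd ↥{w : Mon n | mdeg w = d ∧ (w = u ∨ σ.lt u w)},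
      SigmaExchange K {w : Mon n | mdeg w = d ∧ (w = u ∨ σ.lt u w)} σ.lt o.lt) ∧
    IsFiberType K {w : Mon n | mdeg w = d ∧ (w = u ∨ σ.lt u w)} := by
  have h := strongExchange_initial σ d u
  exact ⟨fun o => h.sigmaExchange K o.lt, h.isFiberType K⟩
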